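/- Let R > 0, α > 0, δ > 0 be real numbers with d = α·δ, and let θ > 0. Let H be an exponential(1) random variable and let Y be a real-valued random variable, independent of H, whose law has density y ↦ (δ/R^d)·y^{δ-1} on [0, R^α] (and zero elsewhere) with respect to Lebesgue measure. Then P(H < θ·(1+Y)) = 1 - (δ·e^{-θ}/(R^d·θ^δ))·γ(δ, R^α·θ). (Proposition 1: the CDF of the compound fading–path loss variable Z = |h|²/(1+r^α) evaluated at θ.) -/

import Mathlib

/-!
Conditionally on an independent level `X ≥ 0`, an exponential variable of rate `r` stays below `X`
with probability `1 - exp (-r X)`. Averaging turns the probability into `1 - mgf X (-r)`. For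
`X = θ (1 + Y)` the moment generating function factors as `exp (-r θ) * mgf Y (-r θ)`, and for `Y`
with a power density on `[0, B]` the last factor is a rescaled incomplete gamma integral.
-/

open MeasureTheory ProbabilityTheory Real

/-- The lower incomplete gamma function `γ(s, x) = ∫₀ˣ t^(s-1) e^(-t) dt`. -/
noncomputable def lowerIncompleteGamma (s x : ℝ) : ℝ :=
  ∫ t in (0:ℝ)..x, t ^ (s - 1) * Real.exp (-t)

lemma integral_rpow_mul_exp_neg_mul_eq_lowerIncompleteGamma_div {s a x : ℝ} (ha : 0 < a)
    (hx : 0 ≤ x) :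
    ∫ y in (0 : ℝ)..x, y ^ (s - 1) * exp (-(a * y)) = lowerIncompleteGamma s (x * a) / a ^ s := by
  have rescale : ∀ y ∈ Set.uIcc 0 x,
      y ^ (s - 1) * exp (-(a * y)) =
        (a ^ (s - 1))⁻¹ * ((a * y) ^ (s - 1) * exp (-(a * y))) := by
    intro y hy
    rw [Set.uIcc_of_le hx] at hy
    rw [mul_rpow ha.le hy.1, mul_assoc, inv_mul_cancel_left₀ (rpow_pos_of_pos ha _).ne']
  rw [intervalIntegral.integral_congr rescale, intervalIntegral.integral_const_mul,
    intervalIntegral.integral_comp_mul_left (fun t ↦ t ^ (s - 1) * exp (-t)) ha.ne',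
    mul_zero, mul_comm a x, ← lowerIncompleteGamma, rpow_sub_one ha.ne', smul_eq_mul]
  field_simp

lemma integral_withDensity_ofReal_indicator {α E : Type*} [MeasurableSpace α]
    [NormedAddCommGroup E] [NormedSpace ℝ E] {μ : Measure α} {s : Set α} (hs : MeasurableSet s)
    {f : α → ℝ} (hf : Measurable f) (hf_nonneg : ∀ x ∈ s, 0 ≤ f x) (g : α → E) :
    ∫ x, g x ∂μ.withDensity (fun x ↦ ENNReal.ofReal (s.indicator f x)) =
      ∫ x in s, f x • g x ∂μ := by
  rw [integral_withDensity_eq_integral_toReal_smul (hf.indicator hs).ennreal_ofReal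
    (ae_of_all _ fun _ ↦ ENNReal.ofReal_lt_top), ← integral_indicator hs]
  congr with x
  rw [ENNReal.toReal_ofReal (Set.indicator_nonneg hf_nonneg x), Set.indicator_smul_apply_left]

/-- The power function distribution on `[0, B]` with exponent `s`: for `0 < s` and `0 < B`, the law
of `B * U ^ (1 / s)` with `U` uniform on `[0, 1]`. -/
noncomputable def powerFunctionMeasure (s B : ℝ) : Measure ℝ :=
  volume.withDensity fun y ↦
    ENNReal.ofReal ((Set.Icc 0 B).indicator (fun y ↦ s / B ^ s * y ^ (s - 1)) y)

lemma ae_nonneg_powerFunctionMeasure (s B : ℝ) : ∀ᵐ y ∂powerFunctionMeasure s B, 0 ≤ y := by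
  have h_density : Measurable fun y ↦
      ENNReal.ofReal ((Set.Icc 0 B).indicator (fun y ↦ s / B ^ s * y ^ (s - 1)) y) :=
    (Measurable.indicator (by fun_prop) measurableSet_Icc).ennreal_ofReal
  refine (ae_withDensity_iff h_density).2 (ae_of_all _ fun y hy ↦ ?_)
  by_contra hy_neg
  exact hy (by simp [Set.indicator_of_notMem fun h : y ∈ Set.Icc 0 B ↦ hy_neg h.1])

lemma mgf_id_powerFunctionMeasure_neg {s B a : ℝ} (hs : 0 ≤ s) (hB : 0 ≤ B) (ha : 0 < a) :
    mgf id (powerFunctionMeasure s B) (-a) =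
      s / B ^ s * (lowerIncompleteGamma s (B * a) / a ^ s) := by
  have h_nonneg : ∀ y ∈ Set.Icc 0 B, 0 ≤ s / B ^ s * y ^ (s - 1) := fun y hy ↦
    mul_nonneg (by positivity) (rpow_nonneg hy.1 _)
  calc mgf id (powerFunctionMeasure s B) (-a)
      = ∫ y in Set.Icc 0 B, (s / B ^ s * y ^ (s - 1)) • exp (-a * y) :=
        integral_withDensity_ofReal_indicator measurableSet_Icc (by fun_prop) h_nonneg _
    _ = s / B ^ s * ∫ y in (0 : ℝ)..B, y ^ (s - 1) * exp (-(a * y)) := by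
        simp only [integral_Icc_eq_integral_Ioc, ← intervalIntegral.integral_of_le hB,
          smul_eq_mul, mul_assoc, neg_mul, intervalIntegral.integral_const_mul]
    _ = s / B ^ s * (lowerIncompleteGamma s (B * a) / a ^ s) := by
        rw [integral_rpow_mul_exp_neg_mul_eq_lowerIncompleteGamma_div ha hB]

lemma expMeasure_eq_withDensity_indicator (r : ℝ) :
    expMeasure r = volume.withDensity fun x ↦
      ENNReal.ofReal ((Set.Ici 0).indicator (fun x ↦ r * exp (-(r * x))) x) := by
  change volume.withDensity (exponentialPDF r) = _
  simp only [funext (exponentialPDF_eq r), Set.indicator_apply, Set.mem_Ici]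

lemma expMeasure_real_Iio {r x : ℝ} (hr : 0 < r) (hx : 0 ≤ x) :
    (expMeasure r).real (Set.Iio x) = 1 - exp (-(r * x)) := by
  have := isProbabilityMeasure_expMeasure hr
  have : NullSingletonClass (expMeasure r) := nullSingletonClass_withDensity _
  rw [measureReal_congr Iio_ae_eq_Iic, ← cdf_eq_real, cdf_expMeasure_eq hr, if_pos hx]

section Independence

variable {Ω : Type*} [MeasurableSpace Ω] {P : Measure Ω}

lemma measureReal_prodMk_mem_of_indepFun {α β : Type*} [MeasurableSpace α] [MeasurableSpace β]
    [IsFiniteMeasure P] {X : Ω → α} {Y : Ω → β} {ν : Measure β} (hX : AEMeasurable X P)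
    (hY : HasLaw Y ν P) (hXY : IndepFun X Y P) {s : Set (α × β)} (hs : MeasurableSet s) :
    P.real {ω | (X ω, Y ω) ∈ s} = ∫ ω, ν.real (Prod.mk (X ω) ⁻¹' s) ∂P := by
  have := hY.isFiniteMeasure_iff.1 ‹_›
  have h_slice : Measurable fun x ↦ ν (Prod.mk x ⁻¹' s) := measurable_measure_prodMk_left hs
  have h_law : HasLaw (fun ω ↦ (X ω, Y ω)) ((P.map X).prod ν) P := hXY.hasLaw_prod ⟨hX, rfl⟩ hY
  calc P.real {ω | (X ω, Y ω) ∈ s}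
      = (∫⁻ ω, ν (Prod.mk (X ω) ⁻¹' s) ∂P).toReal := by
        rw [measureReal_def, h_law.measure_eq (p := (· ∈ s)) hs, Set.ofPred_mem_eq,
          Measure.prod_apply hs, lintegral_map' h_slice.aemeasurable hX]
    _ = ∫ ω, ν.real (Prod.mk (X ω) ⁻¹' s) ∂P :=
        (integral_toReal (h_slice.comp_aemeasurable hX)
          (ae_of_all _ fun _ ↦ measure_lt_top _ _)).symm

variable {H : Ω → ℝ} {r : ℝ}

lemma measureReal_lt_eq_one_sub_mgf_of_hasLaw_expMeasure {X : Ω → ℝ} (hr : 0 < r)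
    (hH : HasLaw H (expMeasure r) P) (hX : AEMeasurable X P) (hX_nonneg : ∀ᵐ ω ∂P, 0 ≤ X ω)
    (hHX : IndepFun H X P) :
    P.real {ω | H ω < X ω} = 1 - mgf X P (-r) := by
  have := isProbabilityMeasure_expMeasure hr
  have := hH.isProbabilityMeasure
  have h_integrable : Integrable (fun ω ↦ exp (-r * X ω)) P := by
    refine .of_bound (by fun_prop) 1 (hX_nonneg.mono fun ω hω ↦ ?_)
    rw [norm_of_nonneg (exp_pos _).le, exp_le_one_iff, neg_mul]
    exact neg_nonpos.2 (mul_nonneg hr.le hω)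
  calc P.real {ω | H ω < X ω}
      = ∫ ω, (expMeasure r).real (Set.Iio (X ω)) ∂P :=
        measureReal_prodMk_mem_of_indepFun hX hH hHX.symm
          (measurableSet_lt measurable_snd measurable_fst)
    _ = ∫ ω, (1 - exp (-r * X ω)) ∂P :=
        integral_congr_ae (hX_nonneg.mono fun ω hω ↦ by
          simp only [expMeasure_real_Iio hr hω, neg_mul])
    _ = 1 - mgf X P (-r) := by
        rw [integral_sub (integrable_const 1) h_integrable, integral_const, probReal_univ,
          one_smul, mgf]

theorem stmt_1_general {Y : Ω → ℝ} {s B θ : ℝ} (hr : 0 < r) (hs : 0 < s) (hB : 0 < B) (hθ : 0 < θ)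
    (hH : HasLaw H (expMeasure r) P) (hY : HasLaw Y (powerFunctionMeasure s B) P)
    (hHY : IndepFun H Y P) :
    P.real {ω | H ω < θ * (1 + Y ω)} =
      1 - s * exp (-(r * θ)) / (B ^ s * (r * θ) ^ s) *
        lowerIncompleteGamma s (B * (r * θ)) := by
  have hY_nonneg : ∀ᵐ ω ∂P, 0 ≤ Y ω :=
    ae_of_ae_map hY.aemeasurable (hY.map_eq ▸ ae_nonneg_powerFunctionMeasure s B)
  have h_level_nonneg : ∀ᵐ ω ∂P, 0 ≤ θ * (1 + Y ω) := hY_nonneg.mono fun ω hω ↦ by positivity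
  have h_indep : IndepFun H (fun ω ↦ θ * (1 + Y ω)) P :=
    hHY.comp measurable_id (by fun_prop : Measurable fun y : ℝ ↦ θ * (1 + y))
  have h_mgf : mgf Y P (-(r * θ)) =
      s / B ^ s * (lowerIncompleteGamma s (B * (r * θ)) / (r * θ) ^ s) := by
    rw [← mgf_id_map hY.aemeasurable, hY.map_eq,
      mgf_id_powerFunctionMeasure_neg hs.le hB.le (mul_pos hr hθ)]
  rw [measureReal_lt_eq_one_sub_mgf_of_hasLaw_expMeasure hr hH
      ((hY.aemeasurable.const_add 1).const_mul θ) h_level_nonneg h_indep,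
    mgf_const_mul, mgf_const_add, mul_neg, mul_one, mul_comm θ r, h_mgf]
  ring

end Independence

/-- Proposition 1: if `H` is exponential(1) and `Y` (independent of `H`) has density
`y ↦ (δ/R^d) y^{δ-1}` on `[0, R^α]`, then
`P(H < θ(1+Y)) = 1 - (δ e^{-θ}/(R^d θ^δ)) γ(δ, R^α θ)`. -/
theorem stmt_1 {Ω : Type*} [MeasureSpace Ω]
    [IsProbabilityMeasure (ℙ : Measure Ω)]
    (R α δ θ d : ℝ) (hR : 0 < R) (hα : 0 < α) (hδ : 0 < δ) (hθ : 0 < θ)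
    (hd : d = α * δ)
    (H Y : Ω → ℝ) (hHm : Measurable H) (hYm : Measurable Y)
    (hHlaw : Measure.map H ℙ =
      volume.withDensity fun x =>
        ENNReal.ofReal (Set.indicator (Set.Ici (0:ℝ)) (fun x => Real.exp (-x)) x))
    (hYlaw : Measure.map Y ℙ =
      volume.withDensity fun y =>
        ENNReal.ofReal (Set.indicator (Set.Icc (0:ℝ) (R ^ α))
          (fun y => (δ / R ^ d) * y ^ (δ - 1)) y))
    (hindep : IndepFun H Y ℙ) :
    ℙ {ω | H ω < θ * (1 + Y ω)} =
      ENNReal.ofReal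
        (1 - (δ * Real.exp (-θ) / (R ^ d * θ ^ δ)) * lowerIncompleteGamma δ (R ^ α * θ)) := by
  have hH : HasLaw H (expMeasure 1) ℙ :=
    ⟨hHm.aemeasurable, by simpa only [expMeasure_eq_withDensity_indicator, one_mul] using hHlaw⟩
  have hRd : R ^ d = (R ^ α) ^ δ := by rw [hd, rpow_mul hR.le]
  have hY : HasLaw Y (powerFunctionMeasure δ (R ^ α)) ℙ :=
    ⟨hYm.aemeasurable, by rw [hYlaw, hRd, powerFunctionMeasure]⟩
  rw [← ofReal_measureReal,
    stmt_1_general one_pos hδ (rpow_pos_of_pos hR α) hθ hH hY hindep, one_mul, hRd]
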